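/- arXiv:1811.01246 — 2 statements merged into one kernel-verified Lean document; each statement's English description precedes it below -/
import Mathlib

section
/- Let α > −1 and −1/2 < α + β < 1/2, and let θ > 0 satisfy 1/(1+θ) < α + β + 1/2. There is a constant C = C(α,β,θ) such that for every measurable f ≥ 0 on (0,∞) and every x > 0: Ψ^{α,β}_{*,E} f(x) ≤ C ( x^β [D((z ↦ z^{−β} f(z))^{1+θ})(x)]^{1/(1+θ)} + x^β [R((z ↦ z^{−β} f(z))^{1+θ})(x)]^{1/(1+θ)} ). -/
open MeasureTheory Set Filter
open scoped ENNReal NNReal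

noncomputable def PsiE (a b t x z : ℝ) : ℝ :=
  if |x - z| < t ∧ t < x + z then
    (x * z) ^ (-(2*a) - b) * t ^ (-(2*a) - 2*b) *
      ((t ^ 2 - (x - z) ^ 2) * ((x + z) ^ 2 - t ^ 2)) ^ (a + b - 1/2)
  else 0

noncomputable def PsiStarE (a b : ℝ) (f : ℝ → ℝ) (x : ℝ) : ℝ≥0∞ :=
  ⨆ t ∈ Set.Ioi (0 : ℝ),
    ∫⁻ z in Set.Ioi (0 : ℝ), ENNReal.ofReal (PsiE a b t x z * f z * z ^ (2 * a + 1))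

noncomputable def Dop (f : ℝ → ℝ) (x : ℝ) : ℝ≥0∞ :=
  ⨆ (A : ℝ) (B : ℝ) (_ : 0 ≤ A) (_ : A < x) (_ : x < B),
    (ENNReal.ofReal (B ^ 2 - A ^ 2))⁻¹ * ∫⁻ z in Set.Ioo A B, ENNReal.ofReal (z * |f z|)

noncomputable def Rop (f : ℝ → ℝ) (x : ℝ) : ℝ≥0∞ :=
  ⨆ t ∈ Set.Ioi (2 * x),
    (ENNReal.ofReal (2 * x))⁻¹ * ∫⁻ z in Set.Icc (t - x) (t + x), ENNReal.ofReal |f z|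

/-- The integral of `(v (1 - v)) ^ r` over the unit interval, as a Beta value. -/
theorem lintegral_rpow_mul_one_sub_rpow {r : ℝ} (hr : -1 < r) :
    ∫⁻ v in Ioo (0 : ℝ) 1, ENNReal.ofReal (v ^ r * (1 - v) ^ r) =
      ENNReal.ofReal (ProbabilityTheory.beta (r + 1) (r + 1)) := by
  have hpos := ProbabilityTheory.beta_pos (α := r + 1) (β := r + 1) (by linarith) (by linarith)
  have h1 := ProbabilityTheory.lintegral_betaPDF_eq_one (α := r + 1) (β := r + 1)
    (by linarith) (by linarith)
  rw [ProbabilityTheory.lintegral_betaPDF] at h1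
  have hpt : ∀ v : ℝ, ENNReal.ofReal (v ^ r * (1 - v) ^ r) =
      ENNReal.ofReal (ProbabilityTheory.beta (r + 1) (r + 1)) *
        ENNReal.ofReal (1 / ProbabilityTheory.beta (r + 1) (r + 1) * v ^ (r + 1 - 1) *
          (1 - v) ^ (r + 1 - 1)) := fun v => by
    rw [← ENNReal.ofReal_mul hpos.le]
    congr 1
    rw [add_sub_cancel_right]
    field_simp
  simp_rw [hpt]
  rw [lintegral_const_mul _ (by fun_prop), h1, mul_one]

/-- The affine image of `z ^ 2` in the unit interval when `A < z < B`. -/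
noncomputable def sqRatio (A B z : ℝ) : ℝ := (z ^ 2 - A ^ 2) / (B ^ 2 - A ^ 2)

@[fun_prop]
theorem measurable_sqRatio (A B : ℝ) : Measurable (sqRatio A B) := by
  unfold sqRatio
  fun_prop

theorem one_sub_sqRatio {A B : ℝ} (h : B ^ 2 - A ^ 2 ≠ 0) (z : ℝ) :
    1 - sqRatio A B z = (B ^ 2 - z ^ 2) / (B ^ 2 - A ^ 2) := by
  unfold sqRatio
  field_simp
  ring

theorem sqRatio_mem_Ioo {A B z : ℝ} (hA : 0 ≤ A) (hz : z ∈ Ioo A B) :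
    sqRatio A B z ∈ Ioo (0 : ℝ) 1 := by
  obtain ⟨h1, h2⟩ := hz
  have hAB : 0 < B ^ 2 - A ^ 2 := by nlinarith
  refine ⟨div_pos (by nlinarith) hAB, ?_⟩
  rw [sqRatio, div_lt_one hAB]
  nlinarith

theorem lintegral_sqRatio_rpow_le {A B r : ℝ} (hA : 0 ≤ A) (hAB : A < B) (hr : -1 < r) :
    ∫⁻ z in Ioo A B, ENNReal.ofReal (2 * z / (B ^ 2 - A ^ 2)) *
        ENNReal.ofReal (sqRatio A B z ^ r * (1 - sqRatio A B z) ^ r) ≤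
      ENNReal.ofReal (ProbabilityTheory.beta (r + 1) (r + 1)) := by
  have hL : 0 < B ^ 2 - A ^ 2 := by nlinarith
  have hderiv : ∀ z ∈ Ioo A B,
      HasDerivWithinAt (sqRatio A B) (2 * z / (B ^ 2 - A ^ 2)) (Ioo A B) z := fun z _ => by
    have := (((hasDerivAt_pow 2 z).sub_const (A ^ 2)).div_const
      (B ^ 2 - A ^ 2)).hasDerivWithinAt (s := Ioo A B)
    exact HasDerivWithinAt.congr_deriv (f := sqRatio A B) this (by simp)
  have hinj : InjOn (sqRatio A B) (Ioo A B) := fun y hy z hz hyz => by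
    simp only [sqRatio, div_left_inj' hL.ne', sub_left_inj] at hyz
    exact (pow_left_inj₀ (hA.trans hy.1.le) (hA.trans hz.1.le) two_ne_zero).1 hyz
  have hsub : sqRatio A B '' Ioo A B ⊆ Ioo 0 1 := by
    rintro _ ⟨z, hz, rfl⟩
    exact sqRatio_mem_Ioo hA hz
  have hcov := lintegral_image_eq_lintegral_abs_deriv_mul measurableSet_Ioo hderiv hinj
    (fun v => ENNReal.ofReal (v ^ r * (1 - v) ^ r))
  rw [← lintegral_rpow_mul_one_sub_rpow hr]
  refine le_of_eq_of_le ?_ (lintegral_mono_set hsub)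
  rw [hcov]
  refine setLIntegral_congr_fun measurableSet_Ioo fun z hz => ?_
  have : 0 ≤ 2 * z / (B ^ 2 - A ^ 2) := div_nonneg (by linarith [hz.1]) hL.le
  simp only [abs_of_nonneg this]

/-- Hölder's inequality with a weight. -/
theorem lintegral_weight_mul_le {X : Type*} [MeasurableSpace X] {μ : Measure X} {p q : ℝ}
    (hpq : p.HolderConjugate q) {w F G : X → ℝ≥0∞} (hw : Measurable w) (hF : Measurable F)
    (hG : Measurable G) :
    ∫⁻ z, w z * (F z * G z) ∂μ ≤
      (∫⁻ z, w z * F z ^ p ∂μ) ^ (1 / p) * (∫⁻ z, w z * G z ^ q ∂μ) ^ (1 / q) := by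
  have h := ENNReal.lintegral_mul_le_Lp_mul_Lq (μ.withDensity w) hpq hF.aemeasurable
    hG.aemeasurable
  rwa [lintegral_withDensity_eq_lintegral_mul _ hw (hF.mul hG),
    lintegral_withDensity_eq_lintegral_mul _ hw (hF.pow_const p),
    lintegral_withDensity_eq_lintegral_mul _ hw (hG.pow_const q)] at h

theorem lintegral_mul_sqRatio_rpow_le {A B s p q : ℝ} (hA : 0 ≤ A) (hAB : A < B)
    (hpq : p.HolderConjugate q) (hs : -1 < (s - 1) * q) {G : ℝ → ℝ≥0∞} (hG : Measurable G) :
    ∫⁻ z in Ioo A B, ENNReal.ofReal (2 * z / (B ^ 2 - A ^ 2)) *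
        (G z * ENNReal.ofReal (sqRatio A B z ^ (s - 1) * (1 - sqRatio A B z) ^ (s - 1))) ≤
      (∫⁻ z in Ioo A B, ENNReal.ofReal (2 * z / (B ^ 2 - A ^ 2)) * G z ^ p) ^ (1 / p) *
        ENNReal.ofReal (ProbabilityTheory.beta ((s - 1) * q + 1) ((s - 1) * q + 1)) ^
          (1 / q) := by
  refine (lintegral_weight_mul_le hpq (by fun_prop) hG (by fun_prop)).trans ?_
  gcongr
  · exact hpq.symm.one_div_nonneg
  refine le_of_eq_of_le ?_ (lintegral_sqRatio_rpow_le hA hAB hs)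
  refine setLIntegral_congr_fun measurableSet_Ioo fun z hz => ?_
  obtain ⟨h0, h1⟩ := sqRatio_mem_Ioo hA hz
  have h1' : 0 < 1 - sqRatio A B z := by linarith
  rw [ENNReal.ofReal_rpow_of_nonneg (by positivity) hpq.symm.nonneg,
    Real.mul_rpow (by positivity) (by positivity), ← Real.rpow_mul h0.le, ← Real.rpow_mul h1'.le]

/-- The condition defining the support of `PsiE` is symmetric in `t` and `z`. -/
theorem abs_sub_lt_and_lt_add_iff (t x z : ℝ) :
    (|x - z| < t ∧ t < x + z) ↔ z ∈ Ioo |x - t| (x + t) := by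
  rw [mem_Ioo, abs_lt, abs_lt]
  constructor
  · rintro ⟨⟨h1, h2⟩, h3⟩
    exact ⟨⟨by linarith, by linarith⟩, by linarith⟩
  · rintro ⟨⟨h1, h2⟩, h3⟩
    exact ⟨⟨by linarith, by linarith⟩, by linarith⟩

theorem PsiE_mul_eq {a b t x z : ℝ} (hx : 0 < x) (ht : 0 < t) (hz : z ∈ Ioo |x - t| (x + t))
    (y : ℝ) :
    PsiE a b t x z * y * z ^ (2 * a + 1) =
      x ^ b * (4 ^ (2 * (a + b)) / 2) *
        (2 * z / ((x + t) ^ 2 - |x - t| ^ 2) * (z ^ (-b) * y *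
          (sqRatio |x - t| (x + t) z ^ (a + b + 1 / 2 - 1) *
            (1 - sqRatio |x - t| (x + t) z) ^ (a + b + 1 / 2 - 1)))) := by
  have hz0 : 0 < z := (abs_nonneg _).trans_lt hz.1
  have hL : (x + t) ^ 2 - |x - t| ^ 2 = 4 * (x * t) := by rw [sq_abs]; ring
  obtain ⟨h0, h1⟩ := sqRatio_mem_Ioo (abs_nonneg _) hz
  have hL0 : (0 : ℝ) < 4 * (x * t) := by positivity
  have h1' : 0 < 1 - sqRatio |x - t| (x + t) z := by linarith
  have hprod : (t ^ 2 - (x - z) ^ 2) * ((x + z) ^ 2 - t ^ 2) =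
      (4 * (x * t)) * (4 * (x * t)) *
        (sqRatio |x - t| (x + t) z * (1 - sqRatio |x - t| (x + t) z)) := by
    rw [one_sub_sqRatio (by rw [hL]; exact hL0.ne'), sqRatio, hL, sq_abs]
    field_simp
    ring
  rw [PsiE, if_pos ((abs_sub_lt_and_lt_add_iff t x z).2 hz), hprod, hL]
  set u := sqRatio |x - t| (x + t) z
  set v := 1 - u
  rw [show a + b + 1 / 2 - 1 = a + b - 1 / 2 by ring,
    Real.mul_rpow (x := 4 * (x * t) * (4 * (x * t))) (by positivity) (by positivity),
    Real.mul_rpow h0.le h1'.le]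
  have key : (x * z) ^ (-(2 * a) - b) * t ^ (-(2 * a) - 2 * b) *
      ((4 * (x * t)) * (4 * (x * t))) ^ (a + b - 1 / 2) * z ^ (2 * a + 1) =
      x ^ b * 4 ^ (2 * (a + b)) * (z / (4 * (x * t))) * z ^ (-b) := by
    have e4 : (0 : ℝ) < 4 := by norm_num
    rw [← Real.exp_log (show 0 < (x * z) ^ (-(2 * a) - b) * t ^ (-(2 * a) - 2 * b) *
      ((4 * (x * t)) * (4 * (x * t))) ^ (a + b - 1 / 2) * z ^ (2 * a + 1) by positivity),
      ← Real.exp_log (show 0 < x ^ b * 4 ^ (2 * (a + b)) * (z / (4 * (x * t))) * z ^ (-b) by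
        positivity)]
    congr 1
    rw [Real.log_mul (by positivity) (by positivity), Real.log_mul (by positivity) (by positivity),
      Real.log_mul (by positivity) (by positivity), Real.log_mul (by positivity) (by positivity),
      Real.log_mul (by positivity) (by positivity), Real.log_mul (by positivity) (by positivity),
      Real.log_div (by positivity) (by positivity), Real.log_rpow (by positivity),
      Real.log_rpow ht, Real.log_rpow (by positivity), Real.log_rpow hz0, Real.log_rpow hx,
      Real.log_rpow e4, Real.log_rpow hz0, Real.log_mul (by positivity) (by positivity),
      Real.log_mul (by positivity) (by positivity), Real.log_mul (by positivity) (by positivity),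
      Real.log_mul (by positivity) (by positivity)]
    ring
  linear_combination (y * (u ^ (a + b - 1 / 2) * v ^ (a + b - 1 / 2))) * key

theorem lintegral_PsiE_mul_le {a b p q : ℝ} (hpq : p.HolderConjugate q)
    (hs : -1 < (a + b + 1 / 2 - 1) * q) {f : ℝ → ℝ} (hf : Measurable f) (hf0 : ∀ z, 0 ≤ f z)
    {t x : ℝ} (ht : 0 < t) (hx : 0 < x) :
    ∫⁻ z in Ioi (0 : ℝ), ENNReal.ofReal (PsiE a b t x z * f z * z ^ (2 * a + 1)) ≤
      ENNReal.ofReal (x ^ b) * ENNReal.ofReal (4 ^ (2 * (a + b)) / 2) *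
        ((∫⁻ z in Ioo |x - t| (x + t), ENNReal.ofReal
            (2 * z / ((x + t) ^ 2 - |x - t| ^ 2) * (z ^ (-b) * f z) ^ p)) ^ (1 / p) *
          ENNReal.ofReal (ProbabilityTheory.beta ((a + b + 1 / 2 - 1) * q + 1)
            ((a + b + 1 / 2 - 1) * q + 1)) ^ (1 / q)) := by
  have hAB : |x - t| < x + t := abs_lt.2 ⟨by linarith, by linarith⟩
  have hL : 0 < (x + t) ^ 2 - |x - t| ^ 2 := by rw [sq_abs]; nlinarith [mul_pos hx ht]
  have hG : Measurable fun z => ENNReal.ofReal (z ^ (-b) * f z) := by fun_prop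
  have hholder := lintegral_mul_sqRatio_rpow_le (abs_nonneg (x - t)) hAB hpq hs hG
  have hrhs : ∫⁻ z in Ioo |x - t| (x + t), ENNReal.ofReal
        (2 * z / ((x + t) ^ 2 - |x - t| ^ 2) * (z ^ (-b) * f z) ^ p) =
      ∫⁻ z in Ioo |x - t| (x + t), ENNReal.ofReal (2 * z / ((x + t) ^ 2 - |x - t| ^ 2)) *
        ENNReal.ofReal (z ^ (-b) * f z) ^ p := by
    refine setLIntegral_congr_fun measurableSet_Ioo fun z hz => ?_
    have hz0 : 0 < z := (abs_nonneg _).trans_lt hz.1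
    have := hf0 z
    rw [ENNReal.ofReal_rpow_of_nonneg (by positivity) hpq.nonneg,
      ENNReal.ofReal_mul (by positivity)]
  rw [hrhs]
  refine le_trans ?_ (mul_le_mul_right hholder _)
  rw [← lintegral_const_mul _ (by fun_prop)]
  refine (setLIntegral_le_lintegral _ _).trans ?_
  rw [← lintegral_indicator measurableSet_Ioo]
  refine lintegral_mono fun z => ?_
  by_cases hz : z ∈ Ioo |x - t| (x + t)
  · have hz0 : 0 < z := (abs_nonneg _).trans_lt hz.1
    have hfz := hf0 z
    rw [indicator_of_mem hz, PsiE_mul_eq hx ht hz, ENNReal.ofReal_mul (by positivity),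
      ENNReal.ofReal_mul (by positivity), ENNReal.ofReal_mul (by positivity),
      ENNReal.ofReal_mul (p := z ^ (-b) * f z) (by positivity)]
  · rw [indicator_of_notMem hz, PsiE, if_neg (mt (abs_sub_lt_and_lt_add_iff t x z).1 hz)]
    simp

theorem lintegral_le_Dop {g : ℝ → ℝ} {x A B : ℝ} (hA : 0 ≤ A) (hAx : A < x) (hxB : x < B) :
    (ENNReal.ofReal (B ^ 2 - A ^ 2))⁻¹ * ∫⁻ z in Ioo A B, ENNReal.ofReal (z * |g z|) ≤
      Dop g x := by
  unfold Dop
  exact le_iSup_of_le A <| le_iSup_of_le B <| le_iSup_of_le hA <| le_iSup_of_le hAx <|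
    le_iSup_of_le hxB le_rfl

theorem lintegral_average_le_Dop {g : ℝ → ℝ} {t x : ℝ} (ht : 0 < t) (hx : 0 < x)
    (htx : t ≤ 2 * x) :
    ∫⁻ z in Ioo |x - t| (x + t), ENNReal.ofReal (2 * z / ((x + t) ^ 2 - |x - t| ^ 2) * |g z|) ≤
      3 * Dop g x := by
  obtain ⟨A, hA0, hAx, hAt, hA3⟩ : ∃ A, 0 ≤ A ∧ A < x ∧ A ≤ |x - t| ∧
      2 * ((x + t) ^ 2 - A ^ 2) ≤ 3 * ((x + t) ^ 2 - |x - t| ^ 2) := by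
    rcases lt_or_ge t x with h | h
    · refine ⟨|x - t|, abs_nonneg _, ?_, le_rfl, ?_⟩
      · rw [abs_of_pos (by linarith)]; linarith
      · rw [sq_abs]; nlinarith [mul_pos hx ht]
    · refine ⟨0, le_rfl, hx, abs_nonneg _, ?_⟩
      rw [sq_abs]
      nlinarith [mul_nonneg (sub_nonneg.2 h) (sub_nonneg.2 htx), mul_pos hx ht]
  have hD : 0 < (x + t) ^ 2 - A ^ 2 := by nlinarith
  have hL : 0 < (x + t) ^ 2 - |x - t| ^ 2 := by linarith
  refine le_trans ?_ (mul_le_mul_right (lintegral_le_Dop hA0 hAx (by linarith : x < x + t)) 3)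
  rw [← mul_assoc, ← ENNReal.ofReal_inv_of_pos hD, ← ENNReal.ofReal_ofNat 3,
    ← ENNReal.ofReal_mul (by norm_num), ← lintegral_const_mul' _ _ ENNReal.ofReal_ne_top]
  refine (lintegral_mono_set (Ioo_subset_Ioo_left hAt)).trans ?_
  refine setLIntegral_mono' measurableSet_Ioo fun z hz => ?_
  have hz0 : 0 < z := hA0.trans_lt hz.1
  rw [← ENNReal.ofReal_mul (by positivity)]
  refine ENNReal.ofReal_le_ofReal ?_
  rw [← mul_assoc]
  refine mul_le_mul_of_nonneg_right ?_ (abs_nonneg _)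
  rw [← div_eq_mul_inv, div_mul_eq_mul_div, div_le_div_iff₀ hL hD]
  nlinarith

theorem lintegral_average_le_Rop {g : ℝ → ℝ} {t x : ℝ} (hx : 0 < x) (htx : 2 * x < t) :
    ∫⁻ z in Ioo |x - t| (x + t), ENNReal.ofReal (2 * z / ((x + t) ^ 2 - |x - t| ^ 2) * |g z|) ≤
      3 * Rop g x := by
  have ht : 0 < t := by linarith
  have hR : (ENNReal.ofReal (2 * x))⁻¹ * ∫⁻ z in Icc (t - x) (t + x), ENNReal.ofReal |g z| ≤
      Rop g x := le_iSup₂_of_le t htx le_rfl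
  refine le_trans ?_ (mul_le_mul_right hR 3)
  have h2x : 0 < 2 * x := by linarith
  rw [← mul_assoc, ← ENNReal.ofReal_inv_of_pos h2x, ← ENNReal.ofReal_ofNat 3,
    ← ENNReal.ofReal_mul (by norm_num), ← lintegral_const_mul' _ _ ENNReal.ofReal_ne_top]
  have habs : |x - t| = t - x := by rw [abs_of_neg (by linarith)]; ring
  rw [habs, add_comm x t]
  refine (lintegral_mono_set Ioo_subset_Icc_self).trans ?_
  refine setLIntegral_mono' measurableSet_Icc fun z hz => ?_
  rw [← ENNReal.ofReal_mul (by positivity)]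
  refine ENNReal.ofReal_le_ofReal (mul_le_mul_of_nonneg_right ?_ (abs_nonneg _))
  have hL : (t + x) ^ 2 - (t - x) ^ 2 = 4 * (x * t) := by ring
  rw [hL, ← div_eq_mul_inv, div_le_div_iff₀ (by positivity) h2x]
  nlinarith [hz.2, mul_pos hx ht, mul_pos hx (sub_pos.2 htx),
    mul_nonneg hx.le (sub_nonneg.2 hz.2)]

/-- control of Ψ_{*,E} by the special operators. -/
theorem PsiStarE_controlled (a b θ : ℝ) (ha : -1 < a) (hab1 : -(1/2) < a + b)
    (hab2 : a + b < 1/2) (hθ : 0 < θ) (hθ2 : 1/(1 + θ) < a + b + 1/2) :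
    ∃ C : ℝ≥0, ∀ f : ℝ → ℝ, Measurable f → (∀ z, 0 ≤ f z) → ∀ x : ℝ, 0 < x →
      PsiStarE a b f x ≤
        C * (ENNReal.ofReal (x ^ b) *
            (Dop (fun z => (z ^ (-b) * f z) ^ (1 + θ)) x) ^ (1/(1 + θ)) +
          ENNReal.ofReal (x ^ b) *
            (Rop (fun z => (z ^ (-b) * f z) ^ (1 + θ)) x) ^ (1/(1 + θ))) := by
  set p : ℝ := 1 + θ with hp
  obtain ⟨q, hpq⟩ : ∃ q, p.HolderConjugate q :=
    ⟨_, Real.HolderConjugate.conjExponent (by linarith)⟩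
  have hs : -1 < (a + b + 1 / 2 - 1) * q := by
    have h1 : q⁻¹ = 1 - p⁻¹ := by linarith [hpq.inv_add_inv_eq_one]
    have h2 : 1 - (a + b + 1 / 2) < q⁻¹ := by rw [h1, inv_eq_one_div]; linarith
    have h3 := mul_lt_mul_of_pos_right h2 hpq.symm.pos
    rw [inv_mul_cancel₀ hpq.symm.ne_zero] at h3
    linarith
  have hp0 : 0 ≤ 1 / p := hpq.one_div_nonneg
  set K : ℝ≥0∞ := ENNReal.ofReal (ProbabilityTheory.beta ((a + b + 1 / 2 - 1) * q + 1)
    ((a + b + 1 / 2 - 1) * q + 1)) ^ (1 / q)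
  have hK : K ≠ ∞ := ENNReal.rpow_ne_top_of_nonneg hpq.symm.one_div_nonneg ENNReal.ofReal_ne_top
  set C : ℝ≥0∞ := ENNReal.ofReal (4 ^ (2 * (a + b)) / 2) * K * 3 ^ (1 / p) with hC
  have hCtop : C ≠ ∞ := ENNReal.mul_ne_top (ENNReal.mul_ne_top ENNReal.ofReal_ne_top hK)
    (ENNReal.rpow_ne_top_of_nonneg hp0 (by norm_num))
  refine ⟨C.toNNReal, fun f hf hf0 x hx => ?_⟩
  rw [ENNReal.coe_toNNReal hCtop]
  refine iSup₂_le fun t ht => (lintegral_PsiE_mul_le hpq hs hf hf0 ht hx).trans ?_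
  have habs : ∫⁻ z in Ioo |x - t| (x + t), ENNReal.ofReal
        (2 * z / ((x + t) ^ 2 - |x - t| ^ 2) * (z ^ (-b) * f z) ^ p) =
      ∫⁻ z in Ioo |x - t| (x + t), ENNReal.ofReal
        (2 * z / ((x + t) ^ 2 - |x - t| ^ 2) * |(z ^ (-b) * f z) ^ p|) := by
    refine setLIntegral_congr_fun measurableSet_Ioo fun z hz => ?_
    have hz0 : 0 < z := (abs_nonneg _).trans_lt hz.1
    have := hf0 z
    have hg : 0 ≤ (z ^ (-b) * f z) ^ p := by positivity
    rw [abs_of_nonneg hg]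
  rw [habs]
  have hfinish : ∀ {I M : ℝ≥0∞}, I ≤ 3 * M →
      ENNReal.ofReal (x ^ b) * ENNReal.ofReal (4 ^ (2 * (a + b)) / 2) * (I ^ (1 / p) * K) ≤
        C * (ENNReal.ofReal (x ^ b) * M ^ (1 / p)) := fun {I M} h => by
    calc _ ≤ ENNReal.ofReal (x ^ b) * ENNReal.ofReal (4 ^ (2 * (a + b)) / 2) *
          ((3 * M) ^ (1 / p) * K) := by gcongr
      _ = _ := by rw [ENNReal.mul_rpow_of_nonneg _ _ hp0, hC]; ring
  rcases le_or_gt t (2 * x) with htx | htx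
  · exact (hfinish (lintegral_average_le_Dop ht hx htx)).trans (by gcongr; exact le_self_add)
  · exact (hfinish (lintegral_average_le_Rop hx htx)).trans (by gcongr; exact le_add_self)
end

section
/- Let α > −1 and −1/2 < α + β < 1/2, and let θ > 0 satisfy 1/(1+θ) < α + β + 1/2. There is a constant C = C(α,β,θ) such that for every measurable f ≥ 0 on (0,∞) and every x > 0: Ψ^{α,β}_{*,F} f(x) ≤ C ( χ_{{β ≥ 1}} [H_{(α+1/2+1−β)(1+θ)+1}(f^{1+θ})(2x)]^{1/(1+θ)} + χ_{{β < 1}} [H_{(α+1/2)(1+θ)+1}(f^{1+θ})(2x)]^{1/(1+θ)} + N_{2α+2} f(x) + [T_{(α+1/2)(1+θ)}(f^{1+θ})(x)]^{1/(1+θ)} ). -/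
open MeasureTheory Set Filter
open scoped ENNReal NNReal

noncomputable def PsiF (a b t x z : ℝ) : ℝ :=
  if x + z < t then
    t ^ (-(2*a) - 2*b) * (t ^ 2 - (x - z) ^ 2) ^ (-a - 1/2) *
      (t ^ 2 - (x + z) ^ 2) ^ (a + b - 1/2)
  else 0

noncomputable def PsiStarF (a b : ℝ) (f : ℝ → ℝ) (x : ℝ) : ℝ≥0∞ :=
  ⨆ t ∈ Set.Ioi (0 : ℝ),
    ∫⁻ z in Set.Ioi (0 : ℝ), ENNReal.ofReal (PsiF a b t x z * f z * z ^ (2 * a + 1))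

noncomputable def Hop (η : ℝ) (f : ℝ → ℝ) (x : ℝ) : ℝ≥0∞ :=
  ENNReal.ofReal (x ^ (-η)) * ∫⁻ z in Set.Ioo (0 : ℝ) x, ENNReal.ofReal (z ^ (η - 1) * f z)

noncomputable def Nop (η : ℝ) (f : ℝ → ℝ) (x : ℝ) : ℝ≥0∞ :=
  ⨆ t ∈ Set.Ioi x,
    ENNReal.ofReal (t ^ (-η)) * ∫⁻ z in Set.Ioo (0 : ℝ) t, ENNReal.ofReal (z ^ (η - 1) * |f z|)

noncomputable def Tmax (η : ℝ) (f : ℝ → ℝ) (x : ℝ) : ℝ≥0∞ :=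
  ⨆ t ∈ Set.Ioi (2 * x),
    ∫⁻ z in Set.Ioo (t / 2) t, ENNReal.ofReal (z ^ (η - 1) * |f z| * (t - z + x) ^ (-η))

lemma rpow_le_of_comparable (r : ℝ) {u y : ℝ} (hy : 0 < y) (h1 : y / 8 ≤ u) (h2 : u ≤ 8 * y) :
    u ^ r ≤ 8 ^ |r| * y ^ r := by
  have hu : 0 < u := by linarith
  rcases le_total 0 r with hr | hr
  · rw [abs_of_nonneg hr, ← Real.mul_rpow (by norm_num) hy.le]
    exact Real.rpow_le_rpow hu.le h2 hr
  · have h3 : u ^ r ≤ (y / 8) ^ r := Real.rpow_le_rpow_of_nonpos (by positivity) h1 hr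
    rw [abs_of_nonpos hr]
    refine h3.trans (le_of_eq ?_)
    rw [Real.div_rpow hy.le (by norm_num), Real.rpow_neg (by norm_num)]
    field_simp

lemma setLIntegral_rpow {B d : ℝ} (hB : -1 < B) (hd : 0 < d) :
    ∫⁻ z in Ioo 0 d, ENNReal.ofReal (z ^ B) = ENNReal.ofReal (d ^ (B + 1) / (B + 1)) := by
  have hint : IntegrableOn (fun z : ℝ => z ^ B) (Ioc 0 d) :=
    (intervalIntegrable_iff_integrableOn_Ioc_of_le hd.le).1
      (intervalIntegral.intervalIntegrable_rpow' hB)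
  rw [setLIntegral_congr Ioo_ae_eq_Ioc, ← ofReal_integral_eq_lintegral_ofReal hint]
  · rw [← intervalIntegral.integral_of_le hd.le, integral_rpow (Or.inl hB),
      Real.zero_rpow (by linarith), sub_zero]
  · filter_upwards [ae_restrict_mem measurableSet_Ioc] with z hz
    exact Real.rpow_nonneg hz.1.le _

lemma setLIntegral_sub_rpow {A d : ℝ} (hA : -1 < A) (hd : 0 < d) :
    ∫⁻ z in Ioo 0 d, ENNReal.ofReal ((d - z) ^ A) = ENNReal.ofReal (d ^ (A + 1) / (A + 1)) := by
  rw [← setLIntegral_rpow hA hd, ← lintegral_indicator measurableSet_Ioo,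
    ← lintegral_indicator measurableSet_Ioo,
    ← lintegral_sub_left_eq_self ((Ioo 0 d).indicator fun z => ENNReal.ofReal (z ^ A)) d]
  refine lintegral_congr fun z => ?_
  by_cases hz : z ∈ Ioo 0 d
  · have hz' : d - z ∈ Ioo 0 d := ⟨by linarith [hz.2], by linarith [hz.1]⟩
    rw [indicator_of_mem hz, indicator_of_mem hz']
  · have hz' : d - z ∉ Ioo 0 d := fun h => hz ⟨by linarith [h.2], by linarith [h.1]⟩
    rw [indicator_of_notMem hz, indicator_of_notMem hz']

lemma exists_setLIntegral_beta_le {A B : ℝ} (hA : -1 < A) (hB : -1 < B) :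
    ∃ K : ℝ, 0 ≤ K ∧ ∀ d : ℝ, 0 < d →
      ∫⁻ z in Ioo 0 d, ENNReal.ofReal ((d - z) ^ A * z ^ B) ≤
        ENNReal.ofReal (K * d ^ (A + B + 1)) := by
  have hA' : 0 < A + 1 := by linarith
  have hB' : 0 < B + 1 := by linarith
  refine ⟨8 ^ |A| / (B + 1) + 8 ^ |B| / (A + 1), by positivity, fun d hd => ?_⟩
  have hpt : ∀ z ∈ Ioo 0 d, ENNReal.ofReal ((d - z) ^ A * z ^ B) ≤
      ENNReal.ofReal (8 ^ |A| * d ^ A) * ENNReal.ofReal (z ^ B) +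
        ENNReal.ofReal (8 ^ |B| * d ^ B) * ENNReal.ofReal ((d - z) ^ A) := by
    intro z hz
    have h1 : 0 ≤ z ^ B := Real.rpow_nonneg hz.1.le _
    have h2 : 0 ≤ (d - z) ^ A := Real.rpow_nonneg (by linarith [hz.2]) _
    rw [← ENNReal.ofReal_mul (by positivity), ← ENNReal.ofReal_mul (by positivity),
      ← ENNReal.ofReal_add (by positivity) (by positivity)]
    apply ENNReal.ofReal_le_ofReal
    rcases le_total z (d / 2) with h | h
    · have := rpow_le_of_comparable A hd (u := d - z) (by linarith) (by linarith [hz.1])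
      have h3 : 0 ≤ 8 ^ |B| * d ^ B * (d - z) ^ A := by positivity
      nlinarith [mul_le_mul_of_nonneg_right this h1]
    · have := rpow_le_of_comparable B hd (u := z) (by linarith) (by linarith [hz.2])
      have h3 : 0 ≤ 8 ^ |A| * d ^ A * z ^ B := by positivity
      nlinarith [mul_le_mul_of_nonneg_right this h2]
  refine (setLIntegral_mono' measurableSet_Ioo hpt).trans ?_
  rw [lintegral_add_left (by fun_prop), lintegral_const_mul _ (by fun_prop),
    lintegral_const_mul _ (by fun_prop), setLIntegral_rpow hB hd, setLIntegral_sub_rpow hA hd,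
    ← ENNReal.ofReal_mul (by positivity), ← ENNReal.ofReal_mul (by positivity),
    ← ENNReal.ofReal_add (by positivity) (by positivity)]
  apply ENNReal.ofReal_le_ofReal
  apply le_of_eq
  rw [show A + B + 1 = A + (B + 1) by ring, Real.rpow_add hd A, Real.rpow_add hd B,
    Real.rpow_add hd A, Real.rpow_add hd B, Real.rpow_one]
  ring

lemma setLIntegral_le_of_le_mul {p q : ℝ} (hpq : p.HolderConjugate q) {S : Set ℝ}
    (hS : MeasurableSet S) {h F G : ℝ → ℝ} (hF : Measurable F) (hG : Measurable G)
    (hF0 : ∀ z ∈ S, 0 ≤ F z) (hG0 : ∀ z ∈ S, 0 ≤ G z) {c M : ℝ} (hc : 0 ≤ c) (hM : 0 ≤ M)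
    (hle : ∀ z ∈ S, h z ≤ c * (F z * G z))
    (hGM : ∫⁻ z in S, ENNReal.ofReal (G z ^ q) ≤ ENNReal.ofReal M) :
    ∫⁻ z in S, ENNReal.ofReal (h z) ≤
      ENNReal.ofReal (c * M ^ (1 / q)) * (∫⁻ z in S, ENNReal.ofReal (F z ^ p)) ^ (1 / p) := by
  have hp := hpq.pos
  have hq := hpq.symm.pos
  have h1 : ∫⁻ z in S, ENNReal.ofReal (h z) ≤
      ∫⁻ z in S, ENNReal.ofReal c * (ENNReal.ofReal (F z) * ENNReal.ofReal (G z)) := by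
    refine setLIntegral_mono' hS fun z hz => ?_
    rw [← ENNReal.ofReal_mul (hF0 z hz), ← ENNReal.ofReal_mul hc]
    exact ENNReal.ofReal_le_ofReal (hle z hz)
  have h2 := ENNReal.lintegral_mul_le_Lp_mul_Lq (volume.restrict S) hpq
    (f := fun z => ENNReal.ofReal (F z)) (g := fun z => ENNReal.ofReal (G z))
    (by fun_prop) (by fun_prop)
  have h3 : ∫⁻ z in S, ENNReal.ofReal (F z) ^ p = ∫⁻ z in S, ENNReal.ofReal (F z ^ p) :=
    setLIntegral_congr_fun hS fun z hz => ENNReal.ofReal_rpow_of_nonneg (hF0 z hz) hp.le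
  have h4 : ∫⁻ z in S, ENNReal.ofReal (G z) ^ q = ∫⁻ z in S, ENNReal.ofReal (G z ^ q) :=
    setLIntegral_congr_fun hS fun z hz => ENNReal.ofReal_rpow_of_nonneg (hG0 z hz) hq.le
  simp only [Pi.mul_apply] at h2
  rw [h3, h4] at h2
  rw [lintegral_const_mul _ (by fun_prop)] at h1
  calc _ ≤ _ := h1
    _ ≤ ENNReal.ofReal c * ((∫⁻ z in S, ENNReal.ofReal (F z ^ p)) ^ (1 / p) *
          (ENNReal.ofReal M) ^ (1 / q)) := by
        gcongr
        refine h2.trans ?_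
        gcongr
    _ = _ := by
        rw [ENNReal.ofReal_rpow_of_nonneg hM (by positivity), ENNReal.ofReal_mul hc]
        ring

lemma PsiF_eq {a b t x z : ℝ} (hx : 0 < x) (hz : 0 < z) (h : x + z < t) :
    PsiF a b t x z = t ^ (-2 * (a + b)) * ((t - x + z) ^ (-a - 1/2) * (t + x - z) ^ (-a - 1/2)) *
      ((t - x - z) ^ (a + b - 1/2) * (t + x + z) ^ (a + b - 1/2)) := by
  rw [PsiF, if_pos h, ← Real.mul_rpow (by linarith) (by linarith),
    ← Real.mul_rpow (by linarith) (by linarith)]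
  congr 3 <;> ring

/-- The part of the kernel with `t` comparable to `x` is controlled by the Hardy operator. -/
lemma exists_setLIntegral_PsiF_le_Hop {a b p γ : ℝ} (hp : 1 < p) (hps : 1 / p < a + b + 1/2)
    (h1 : 1 / p < 2 * a + 2 - γ) (h2 : 0 ≤ a + b + a + 1 - γ - 1 / p) :
    ∃ C : ℝ, 0 ≤ C ∧ ∀ f : ℝ → ℝ, Measurable f → (∀ z, 0 ≤ f z) → ∀ x t : ℝ, 0 < x → x < t →
      t < 4 * x →
      ∫⁻ z in Ioo 0 (min (t - x) (2 * x)),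
          ENNReal.ofReal (PsiF a b t x z * f z * z ^ (2 * a + 1)) ≤
        ENNReal.ofReal C * (Hop (γ * p + 1) (fun z => f z ^ p) (2 * x)) ^ (1 / p) := by
  have hpq := Real.HolderConjugate.conjExponent hp
  set q := p.conjExponent
  have hp0 : 0 < p := hpq.pos
  have hq0 : 0 < q := hpq.symm.pos
  have hqi : 1 / q = 1 - 1 / p := by
    have := hpq.inv_add_inv_eq_one
    simp only [one_div]; linarith
  have hqq : q * (1 / q) = 1 := by field_simp
  have hA : -1 < (a + b - 1/2) * q := by nlinarith
  have hB : -1 < (2 * a + 1 - γ) * q := by nlinarith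
  obtain ⟨K, hK0, hK⟩ := exists_setLIntegral_beta_le hA hB
  set s := a + b with hs
  set K1 : ℝ := 8 ^ |-2 * s| * (8 ^ |-a - 1/2| * 8 ^ |-a - 1/2|) * 8 ^ |s - 1/2|
  have hK1 : 0 ≤ K1 := by positivity
  refine ⟨K1 * K ^ (1 / q) * 3 ^ (s + a + 1 - γ - 1 / p) * 2 ^ (γ + 1 / p), by positivity,
    fun f hf hf0 x t hx hxt ht => ?_⟩
  have ht0 : 0 < t := hx.trans hxt
  have hd : 0 < t - x := by linarith
  have key := setLIntegral_le_of_le_mul hpq (S := Ioo 0 (min (t - x) (2 * x))) measurableSet_Ioo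
    (h := fun z => PsiF a b t x z * f z * z ^ (2 * a + 1))
    (F := fun z => z ^ γ * f z)
    (G := fun z => (t - x - z) ^ (s - 1/2) * z ^ (2 * a + 1 - γ))
    (c := K1 * x ^ (-s - a - 1) * (t - x) ^ (-a - 1/2))
    (M := K * (t - x) ^ ((s - 1/2) * q + (2 * a + 1 - γ) * q + 1))
    (by fun_prop) (by fun_prop)
    (fun z hz => mul_nonneg (Real.rpow_nonneg hz.1.le _) (hf0 z))
    (fun z hz => mul_nonneg
      (Real.rpow_nonneg (by linarith [lt_min_iff.1 hz.2]) _) (Real.rpow_nonneg hz.1.le _))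
    (by positivity) (by positivity) ?_ ?_
  · refine key.trans ?_
    have hI : ∫⁻ z in Ioo 0 (min (t - x) (2 * x)), ENNReal.ofReal ((z ^ γ * f z) ^ p) ≤
        ∫⁻ z in Ioo 0 (2 * x), ENNReal.ofReal (z ^ (γ * p + 1 - 1) * f z ^ p) := by
      refine (lintegral_mono_set (Ioo_subset_Ioo_right (min_le_right _ _))).trans ?_
      refine setLIntegral_mono' measurableSet_Ioo fun z hz => le_of_eq ?_
      rw [Real.mul_rpow (Real.rpow_nonneg hz.1.le _) (hf0 z), ← Real.rpow_mul hz.1.le,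
        add_sub_cancel_right]
    rw [Hop, ENNReal.mul_rpow_of_nonneg _ _ (by positivity),
      ENNReal.ofReal_rpow_of_nonneg (by positivity) (by positivity), ← mul_assoc,
      ← ENNReal.ofReal_mul (by positivity)]
    refine mul_le_mul' (ENNReal.ofReal_le_ofReal ?_) (ENNReal.rpow_le_rpow hI (by positivity))
    rw [Real.mul_rpow hK0 (by positivity), ← Real.rpow_mul hd.le, ← Real.rpow_mul (by positivity)]
    have e1 : ((s - 1/2) * q + (2 * a + 1 - γ) * q + 1) * (1 / q)
        = (a + 1/2) + (s + a + 1 - γ - 1 / p) := by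
      have : ((s - 1/2) * q + (2 * a + 1 - γ) * q + 1) * (1 / q)
        = ((s - 1/2) + (2 * a + 1 - γ)) * (q * (1 / q)) + 1 / q := by ring
      rw [this, hqq, hqi]; ring
    have e2 : -(γ * p + 1) * (1 / p) = -(γ + 1 / p) := by field_simp
    have h5 : (t - x) ^ (s + a + 1 - γ - 1 / p) ≤
        3 ^ (s + a + 1 - γ - 1 / p) * x ^ (s + a + 1 - γ - 1 / p) := by
      rw [← Real.mul_rpow (by norm_num) hx.le]
      exact Real.rpow_le_rpow hd.le (by linarith) h2
    have e3 : (t - x) ^ (-a - 1/2) * (t - x) ^ (a + 1/2) = 1 := by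
      rw [← Real.rpow_add hd, show -a - 1/2 + (a + 1/2) = 0 by ring, Real.rpow_zero]
    have e4 : (2:ℝ) ^ (γ + 1 / p) * 2 ^ (-(γ + 1 / p)) = 1 := by
      rw [← Real.rpow_add (by norm_num), add_neg_cancel, Real.rpow_zero]
    have e5 : x ^ (-s - a - 1) * x ^ (s + a + 1 - γ - 1 / p) = x ^ (-(γ + 1 / p)) := by
      rw [← Real.rpow_add hx]; congr 1; ring
    rw [e1, e2, Real.rpow_add hd, Real.mul_rpow (by norm_num) hx.le, ← e5]
    calc K1 * x ^ (-s - a - 1) * (t - x) ^ (-a - 1/2) *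
          (K ^ (1 / q) * ((t - x) ^ (a + 1/2) * (t - x) ^ (s + a + 1 - γ - 1 / p)))
        = K1 * K ^ (1 / q) * x ^ (-s - a - 1) * (t - x) ^ (s + a + 1 - γ - 1 / p) *
          ((t - x) ^ (-a - 1/2) * (t - x) ^ (a + 1/2)) := by ring
      _ ≤ K1 * K ^ (1 / q) * x ^ (-s - a - 1) *
          (3 ^ (s + a + 1 - γ - 1 / p) * x ^ (s + a + 1 - γ - 1 / p)) * 1 := by
          rw [e3]; gcongr
      _ = K1 * K ^ (1 / q) * 3 ^ (s + a + 1 - γ - 1 / p) *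
          (2 ^ (γ + 1 / p) * 2 ^ (-(γ + 1 / p))) *
          (x ^ (-s - a - 1) * x ^ (s + a + 1 - γ - 1 / p)) := by rw [e4]; ring
      _ = _ := by ring
  · rintro z ⟨hz0, hz⟩
    obtain ⟨hz1, hz2⟩ := lt_min_iff.1 hz
    have g1 := rpow_le_of_comparable (-2 * s) hx (u := t) (by linarith) (by linarith)
    have g2 := rpow_le_of_comparable (-a - 1/2) hd (u := t - x + z) (by linarith) (by linarith)
    have g3 := rpow_le_of_comparable (-a - 1/2) hx (u := t + x - z) (by linarith) (by linarith)
    have g4 := rpow_le_of_comparable (s - 1/2) hx (u := t + x + z) (by linarith) (by linarith)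
    have p1 : 0 < t - x - z := by linarith
    have p2 : 0 < t - x + z := by linarith
    have p3 : 0 < t + x - z := by linarith
    have p4 := hf0 z
    rw [PsiF_eq hx hz0 (by linarith), ← hs]
    have e1 : z ^ (2 * a + 1) = z ^ γ * z ^ (2 * a + 1 - γ) := by
      rw [← Real.rpow_add hz0]; congr 1; ring
    have e2 : x ^ (-s - a - 1) = x ^ (-2 * s) * x ^ (-a - 1/2) * x ^ (s - 1/2) := by
      rw [← Real.rpow_add hx, ← Real.rpow_add hx]; congr 1; ring
    rw [e2, e1]
    calc _ ≤ 8 ^ |-2 * s| * x ^ (-2 * s) *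
          ((8 ^ |-a - 1/2| * (t - x) ^ (-a - 1/2)) * (8 ^ |-a - 1/2| * x ^ (-a - 1/2))) *
          ((t - x - z) ^ (s - 1/2) * (8 ^ |s - 1/2| * x ^ (s - 1/2))) * f z *
          (z ^ γ * z ^ (2 * a + 1 - γ)) := by gcongr
      _ = _ := by simp only [K1]; ring
  · refine le_trans ?_ (hK _ hd)
    refine (lintegral_mono_set (Ioo_subset_Ioo_right (min_le_left _ _))).trans ?_
    refine setLIntegral_mono' measurableSet_Ioo fun z hz => le_of_eq ?_
    have p1 : 0 ≤ t - x - z := by linarith [hz.2]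
    have p2 := hz.1.le
    rw [Real.mul_rpow (by positivity) (by positivity), ← Real.rpow_mul p1, ← Real.rpow_mul p2]

/-- The part of the kernel with `t` large and `z ≤ t / 2` is controlled by `Nop`. -/
lemma exists_setLIntegral_PsiF_le_Nop (a b : ℝ) :
    ∃ C : ℝ, 0 ≤ C ∧ ∀ f : ℝ → ℝ, (∀ z, 0 ≤ f z) → ∀ x t : ℝ, 0 < x →
      4 * x ≤ t →
      ∫⁻ z in Ioc 0 (t / 2), ENNReal.ofReal (PsiF a b t x z * f z * z ^ (2 * a + 1)) ≤
        ENNReal.ofReal C * Nop (2 * a + 2) f x := by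
  set s := a + b with hs
  set K1 : ℝ := (8 ^ |-a - 1/2| * 8 ^ |-a - 1/2|) * (8 ^ |s - 1/2| * 8 ^ |s - 1/2|)
  refine ⟨K1, by positivity, fun f hf0 x t hx ht => ?_⟩
  have ht0 : 0 < t := by linarith
  have hpt : ∀ z ∈ Ioc 0 (t / 2), ENNReal.ofReal (PsiF a b t x z * f z * z ^ (2 * a + 1)) ≤
      ENNReal.ofReal K1 * ENNReal.ofReal (t ^ (-(2 * a + 2))) *
        ENNReal.ofReal (z ^ (2 * a + 2 - 1) * |f z|) := by
    rintro z ⟨hz0, hz⟩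
    have g2 := rpow_le_of_comparable (-a - 1/2) ht0 (u := t - x + z) (by linarith) (by linarith)
    have g3 := rpow_le_of_comparable (-a - 1/2) ht0 (u := t + x - z) (by linarith) (by linarith)
    have g4 := rpow_le_of_comparable (s - 1/2) ht0 (u := t + x + z) (by linarith) (by linarith)
    have g5 := rpow_le_of_comparable (s - 1/2) ht0 (u := t - x - z) (by linarith) (by linarith)
    have p1 : 0 < t - x - z := by linarith
    have p2 : 0 < t - x + z := by linarith
    have p3 : 0 < t + x - z := by linarith
    have p4 := hf0 z
    rw [← ENNReal.ofReal_mul (by positivity), ← ENNReal.ofReal_mul (by positivity),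
      PsiF_eq hx hz0 (by linarith), ← hs, abs_of_nonneg p4]
    apply ENNReal.ofReal_le_ofReal
    have e2 : t ^ (-(2 * a + 2)) = t ^ (-2 * s) * (t ^ (-a - 1/2) * t ^ (-a - 1/2)) *
        (t ^ (s - 1/2) * t ^ (s - 1/2)) := by
      simp only [← Real.rpow_add ht0]; congr 1; ring
    rw [e2, show 2 * a + 2 - 1 = 2 * a + 1 by ring]
    calc _ ≤ t ^ (-2 * s) *
          ((8 ^ |-a - 1/2| * t ^ (-a - 1/2)) * (8 ^ |-a - 1/2| * t ^ (-a - 1/2))) *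
          ((8 ^ |s - 1/2| * t ^ (s - 1/2)) * (8 ^ |s - 1/2| * t ^ (s - 1/2))) * f z *
          z ^ (2 * a + 1) := by gcongr
      _ = _ := by simp only [K1]; ring
  refine (setLIntegral_mono' measurableSet_Ioc hpt).trans ?_
  rw [lintegral_const_mul' _ _ (ENNReal.mul_ne_top ENNReal.ofReal_ne_top ENNReal.ofReal_ne_top),
    mul_assoc]
  gcongr
  have hxt : t ∈ Ioi x := by rw [mem_Ioi]; linarith
  refine le_trans ?_ (le_iSup₂ (f := fun t (_ : t ∈ Ioi x) => ENNReal.ofReal (t ^ (-(2 * a + 2))) *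
    ∫⁻ z in Set.Ioo (0 : ℝ) t, ENNReal.ofReal (z ^ (2 * a + 2 - 1) * |f z|)) t hxt)
  have hsub : Ioc 0 (t / 2) ⊆ Ioo 0 t := fun z hz => ⟨hz.1, by linarith [hz.2]⟩
  exact mul_le_mul_right (lintegral_mono_set hsub) _

/-- The part of the kernel with `z > t / 2` and `t > 2 * x` is controlled by `Tmax`. -/
lemma exists_setLIntegral_PsiF_le_Tmax {a b p : ℝ} (hp : 1 < p) (hps : 1 / p < a + b + 1/2) :
    ∃ C : ℝ, 0 ≤ C ∧ ∀ f : ℝ → ℝ, Measurable f → (∀ z, 0 ≤ f z) → ∀ x t : ℝ, 0 < x →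
      2 * x < t →
      ∫⁻ z in Ioo (t / 2) (t - x), ENNReal.ofReal (PsiF a b t x z * f z * z ^ (2 * a + 1)) ≤
        ENNReal.ofReal C * (Tmax ((a + 1/2) * p) (fun z => f z ^ p) x) ^ (1 / p) := by
  have hpq := Real.HolderConjugate.conjExponent hp
  set q := p.conjExponent
  have hp0 : 0 < p := hpq.pos
  have hq0 : 0 < q := hpq.symm.pos
  have hqi : 1 / q = 1 - 1 / p := by
    have := hpq.inv_add_inv_eq_one
    simp only [one_div]; linarith
  have hqq : q * (1 / q) = 1 := by field_simp
  have hA : -1 < (a + b - 1/2) * q := by nlinarith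
  set s := a + b with hs
  have hA' : 0 < (s - 1/2) * q + 1 := by linarith
  set K : ℝ := 1 / ((s - 1/2) * q + 1)
  have hK0 : 0 ≤ K := by positivity
  set K1 : ℝ := 8 ^ |-a - 1/2| * 8 ^ |s - 1/2| * 8 ^ |a + 1/2 + 1 / p|
  have hK1 : 0 ≤ K1 := by positivity
  refine ⟨K1 * K ^ (1 / q), by positivity, fun f hf hf0 x t hx ht => ?_⟩
  have ht0 : 0 < t := by linarith
  have hd : 0 < t - x := by linarith
  have key := setLIntegral_le_of_le_mul hpq (S := Ioo (t / 2) (t - x)) measurableSet_Ioo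
    (h := fun z => PsiF a b t x z * f z * z ^ (2 * a + 1))
    (F := fun z => z ^ (a + 1/2 - 1 / p) * f z * (t - z + x) ^ (-(a + 1/2)))
    (G := fun z => (t - x - z) ^ (s - 1/2))
    (c := K1 * t ^ (-s - 1/2 + 1 / p))
    (M := K * (t - x) ^ ((s - 1/2) * q + 1))
    (by fun_prop) (by fun_prop)
    (fun z hz => mul_nonneg (mul_nonneg (Real.rpow_nonneg (by linarith [hz.1]) _) (hf0 z))
      (Real.rpow_nonneg (by linarith [hz.2]) _))
    (fun z hz => Real.rpow_nonneg (by linarith [hz.2]) _)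
    (by positivity) (by positivity) ?_ ?_
  · refine key.trans ?_
    have hI : ∫⁻ z in Ioo (t / 2) (t - x),
          ENNReal.ofReal ((z ^ (a + 1/2 - 1 / p) * f z * (t - z + x) ^ (-(a + 1/2))) ^ p) ≤
        Tmax ((a + 1/2) * p) (fun z => f z ^ p) x := by
      refine le_trans ?_ (le_iSup₂ (f := fun t (_ : t ∈ Ioi (2 * x)) =>
        ∫⁻ z in Set.Ioo (t / 2) t, ENNReal.ofReal (z ^ ((a + 1/2) * p - 1) * |f z ^ p| *
          (t - z + x) ^ (-((a + 1/2) * p)))) t ht)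
      refine (lintegral_mono_set (Ioo_subset_Ioo_right (by linarith : t - x ≤ t))).trans ?_
      refine setLIntegral_mono' measurableSet_Ioo fun z hz => le_of_eq ?_
      have p0 : 0 ≤ z := by linarith [hz.1]
      have p1 : 0 ≤ t - z + x := by linarith [hz.2]
      have p2 := hf0 z
      rw [Real.mul_rpow (by positivity) (by positivity),
        Real.mul_rpow (by positivity) (by positivity), ← Real.rpow_mul p0, ← Real.rpow_mul p1,
        abs_of_nonneg (by positivity), sub_mul, one_div_mul_cancel hp0.ne', neg_mul]
    refine mul_le_mul' (ENNReal.ofReal_le_ofReal ?_) (ENNReal.rpow_le_rpow hI (by positivity))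
    rw [Real.mul_rpow hK0 (by positivity), ← Real.rpow_mul hd.le]
    have e1 : ((s - 1/2) * q + 1) * (1 / q) = s + 1/2 - 1 / p := by
      have : ((s - 1/2) * q + 1) * (1 / q) = (s - 1/2) * (q * (1 / q)) + 1 / q := by ring
      rw [this, hqq, hqi]; ring
    have h5 : (t - x) ^ (s + 1/2 - 1 / p) ≤ t ^ (s + 1/2 - 1 / p) :=
      Real.rpow_le_rpow hd.le (by linarith) (by linarith)
    have e3 : t ^ (-s - 1/2 + 1 / p) * t ^ (s + 1/2 - 1 / p) = 1 := by
      rw [← Real.rpow_add ht0, show -s - 1/2 + 1 / p + (s + 1/2 - 1 / p) = 0 by ring,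
        Real.rpow_zero]
    rw [e1]
    calc _ ≤ K1 * t ^ (-s - 1/2 + 1 / p) * (K ^ (1 / q) * t ^ (s + 1/2 - 1 / p)) := by gcongr
      _ = K1 * K ^ (1 / q) * (t ^ (-s - 1/2 + 1 / p) * t ^ (s + 1/2 - 1 / p)) := by ring
      _ = _ := by rw [e3, mul_one]
  · rintro z ⟨hz, hz1⟩
    have hz0 : 0 < z := by linarith
    have g1 := rpow_le_of_comparable (a + 1/2 + 1 / p) ht0 (u := z) (by linarith) (by linarith)
    have g2 := rpow_le_of_comparable (-a - 1/2) ht0 (u := t - x + z) (by linarith) (by linarith)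
    have g4 := rpow_le_of_comparable (s - 1/2) ht0 (u := t + x + z) (by linarith) (by linarith)
    have p1 : 0 < t - x - z := by linarith
    have p2 : 0 < t - x + z := by linarith
    have p3 : 0 < t + x - z := by linarith
    have p4 := hf0 z
    rw [PsiF_eq hx hz0 (by linarith), ← hs]
    have e1 : z ^ (2 * a + 1) = z ^ (a + 1/2 - 1 / p) * z ^ (a + 1/2 + 1 / p) := by
      rw [← Real.rpow_add hz0]; congr 1; ring
    have e2 : t ^ (-s - 1/2 + 1 / p) =
        t ^ (-2 * s) * t ^ (-a - 1/2) * t ^ (s - 1/2) * t ^ (a + 1/2 + 1 / p) := by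
      simp only [← Real.rpow_add ht0]; congr 1; ring
    rw [e2, e1, show t - z + x = t + x - z by ring, show -(a + 1/2) = -a - 1/2 by ring]
    calc _ ≤ t ^ (-2 * s) *
          ((8 ^ |-a - 1/2| * t ^ (-a - 1/2)) * (t + x - z) ^ (-a - 1/2)) *
          ((t - x - z) ^ (s - 1/2) * (8 ^ |s - 1/2| * t ^ (s - 1/2))) * f z *
          (z ^ (a + 1/2 - 1 / p) * (8 ^ |a + 1/2 + 1 / p| * t ^ (a + 1/2 + 1 / p))) := by gcongr
      _ = _ := by simp only [K1]; ring
  · have := setLIntegral_sub_rpow hA hd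
    rw [show K * (t - x) ^ ((s - 1/2) * q + 1) =
      (t - x) ^ ((s - 1/2) * q + 1) / ((s - 1/2) * q + 1) by simp only [K]; ring, ← this]
    refine (lintegral_mono_set (Ioo_subset_Ioo_left (by linarith : 0 ≤ t / 2))).trans ?_
    refine setLIntegral_mono' measurableSet_Ioo fun z hz => le_of_eq ?_
    rw [← Real.rpow_mul (by linarith [hz.2])]

lemma setLIntegral_PsiF_eq (a b : ℝ) (f : ℝ → ℝ) {x t : ℝ} :
    ∫⁻ z in Ioi (0 : ℝ), ENNReal.ofReal (PsiF a b t x z * f z * z ^ (2 * a + 1)) =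
      ∫⁻ z in Ioo 0 (t - x), ENNReal.ofReal (PsiF a b t x z * f z * z ^ (2 * a + 1)) := by
  rw [← lintegral_indicator measurableSet_Ioi, ← lintegral_indicator measurableSet_Ioo]
  refine lintegral_congr fun z => ?_
  by_cases hz : z ∈ Ioo 0 (t - x)
  · rw [indicator_of_mem hz, indicator_of_mem (show z ∈ Ioi 0 from hz.1)]
  · rw [indicator_of_notMem hz]
    by_cases hz0 : z ∈ Ioi 0
    · have : ¬ (x + z < t) := fun h => hz ⟨hz0, by linarith⟩
      simp [hz0, PsiF, this]
    · rw [indicator_of_notMem hz0]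

lemma exists_PsiStarF_le {a b p γ : ℝ} (hp : 1 < p) (hps : 1 / p < a + b + 1/2)
    (h1 : 1 / p < 2 * a + 2 - γ) (h2 : 0 ≤ a + b + a + 1 - γ - 1 / p) :
    ∃ C : ℝ≥0, ∀ f : ℝ → ℝ, Measurable f → (∀ z, 0 ≤ f z) → ∀ x : ℝ, 0 < x →
      PsiStarF a b f x ≤
        C * ((Hop (γ * p + 1) (fun z => f z ^ p) (2 * x)) ^ (1 / p) + Nop (2 * a + 2) f x +
          (Tmax ((a + 1/2) * p) (fun z => f z ^ p) x) ^ (1 / p)) := by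
  obtain ⟨C1, -, h1⟩ := exists_setLIntegral_PsiF_le_Hop hp hps h1 h2
  obtain ⟨C2, -, h2⟩ := exists_setLIntegral_PsiF_le_Nop a b
  obtain ⟨C3, -, h3⟩ := exists_setLIntegral_PsiF_le_Tmax hp hps
  refine ⟨max C1.toNNReal (max C2.toNNReal C3.toNNReal), fun f hf hf0 x hx => ?_⟩
  refine iSup₂_le fun t _ => ?_
  rw [setLIntegral_PsiF_eq]
  have l1 : ENNReal.ofReal C1 ≤
      ((max C1.toNNReal (max C2.toNNReal C3.toNNReal) : ℝ≥0) : ℝ≥0∞) :=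
    ENNReal.coe_le_coe.2 (le_max_left _ _)
  have l2 : ENNReal.ofReal C2 ≤
      ((max C1.toNNReal (max C2.toNNReal C3.toNNReal) : ℝ≥0) : ℝ≥0∞) :=
    ENNReal.coe_le_coe.2 ((le_max_left _ _).trans (le_max_right _ _))
  have l3 : ENNReal.ofReal C3 ≤
      ((max C1.toNNReal (max C2.toNNReal C3.toNNReal) : ℝ≥0) : ℝ≥0∞) :=
    ENNReal.coe_le_coe.2 ((le_max_right _ _).trans (le_max_right _ _))
  rw [mul_add, mul_add]
  rcases le_or_gt t x with hxt | hxt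
  · simp [Ioo_eq_empty (show ¬ (0 < t - x) by linarith)]
  have k1 := fun h => (h1 f hf hf0 x t hx hxt h).trans (mul_le_mul_left l1 _)
  have k2 := fun h => (h2 f hf0 x t hx h).trans (mul_le_mul_left l2 _)
  have k3 := fun h => (h3 f hf hf0 x t hx h).trans (mul_le_mul_left l3 _)
  rcases le_or_gt t (2 * x) with ht2 | ht2
  · refine le_trans (lintegral_mono_set ?_) ((k1 (by linarith)).trans ?_)
    · exact Ioo_subset_Ioo_right (le_min le_rfl (by linarith))
    · rw [add_assoc]; exact le_self_add
  rcases lt_or_ge t (4 * x) with ht4 | ht4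
  · have hsub : Ioo 0 (t - x) ⊆ Ioo 0 (min (t - x) (2 * x)) ∪ Ioo (t / 2) (t - x) := by
      rintro z ⟨hz0, hz1⟩
      rcases le_or_gt z (t / 2) with h | h
      · exact Or.inl ⟨hz0, lt_min hz1 (by linarith)⟩
      · exact Or.inr ⟨h, hz1⟩
    refine (lintegral_mono_set hsub).trans ((lintegral_union_le _ _ _).trans ?_)
    refine (add_le_add (k1 ht4) (k3 ht2)).trans ?_
    gcongr
    exact le_self_add
  · have hsub : Ioo 0 (t - x) ⊆ Ioc 0 (t / 2) ∪ Ioo (t / 2) (t - x) := by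
      rintro z ⟨hz0, hz1⟩
      rcases le_or_gt z (t / 2) with h | h
      · exact Or.inl ⟨hz0, h⟩
      · exact Or.inr ⟨h, hz1⟩
    refine (lintegral_mono_set hsub).trans ((lintegral_union_le _ _ _).trans ?_)
    refine (add_le_add (k2 ht4) (k3 ht2)).trans ?_
    gcongr
    exact le_add_self

/-- control of Ψ_{*,F} by the special operators. -/
theorem PsiStarF_controlled (a b θ : ℝ) (ha : -1 < a) (hab1 : -(1/2) < a + b)
    (hab2 : a + b < 1/2) (hθ : 0 < θ) (hθ2 : 1/(1 + θ) < a + b + 1/2) :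
    ∃ C : ℝ≥0, ∀ f : ℝ → ℝ, Measurable f → (∀ z, 0 ≤ f z) → ∀ x : ℝ, 0 < x →
      PsiStarF a b f x ≤
        C * ((if 1 ≤ b then
            (Hop ((a + 1/2 + 1 - b) * (1 + θ) + 1) (fun z => f z ^ (1 + θ)) (2*x)) ^
              (1/(1 + θ)) else 0) +
          (if b < 1 then
            (Hop ((a + 1/2) * (1 + θ) + 1) (fun z => f z ^ (1 + θ)) (2*x)) ^
              (1/(1 + θ)) else 0) +
          Nop (2*a + 2) f x +
          (Tmax ((a + 1/2) * (1 + θ)) (fun z => f z ^ (1 + θ)) x) ^ (1/(1 + θ))) := by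
  rcases le_or_gt 1 b with hb | hb
  · obtain ⟨C, hC⟩ := exists_PsiStarF_le (a := a) (b := b) (p := 1 + θ) (γ := a + 1/2 + 1 - b)
      (by linarith) hθ2 (by linarith) (by linarith)
    refine ⟨C, fun f hf hf0 x hx => ?_⟩
    simpa only [if_pos hb, if_neg hb.not_gt, add_zero] using hC f hf hf0 x hx
  · obtain ⟨C, hC⟩ := exists_PsiStarF_le (a := a) (b := b) (p := 1 + θ) (γ := a + 1/2)
      (by linarith) hθ2 (by linarith) (by linarith)
    refine ⟨C, fun f hf hf0 x hx => ?_⟩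
    simpa only [if_pos hb, if_neg hb.not_ge, zero_add] using hC f hf hf0 x hx
end
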